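/- arXiv:1711.01066 — 2 statements merged into one kernel-verified Lean document; each statement's English description precedes it below -/
import Mathlib

section
/- For every integer d ≥ 2 there exist a finite bipartite d-regular simple graph H and a proper edge precoloring of H with colors from {1,…,d} having exactly two precolored edges, such that the precoloring does not extend to a proper d-edge coloring of H. -/
/-- A proper edge precoloring of `G` with precolored edge set `D` and colors in `S`. -/
def IsProperPrecoloring {V : Type*} (G : SimpleGraph V) (D : Set (Sym2 V))
    (φ : Sym2 V → ℕ) (S : Set ℕ) : Prop :=
  D ⊆ G.edgeSet ∧ (∀ e ∈ D, φ e ∈ S) ∧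
    ∀ e ∈ D, ∀ e' ∈ D, e ≠ e' → (∃ v, v ∈ e ∧ v ∈ e') → φ e ≠ φ e'

/-- A proper `t`-edge coloring of `G`: colors in `{1,…,t}`, distinct on adjacent edges. -/
def IsProperEdgeColoring {V : Type*} (G : SimpleGraph V) (t : ℕ)
    (f : Sym2 V → ℕ) : Prop :=
  (∀ e ∈ G.edgeSet, f e ∈ Set.Icc 1 t) ∧
    ∀ e ∈ G.edgeSet, ∀ e' ∈ G.edgeSet, e ≠ e' → (∃ v, v ∈ e ∧ v ∈ e') → f e ≠ f e'

/-!
Suppose a color appears at every vertex of `Q` and also on an edge joining some `p ∈ P` to a vertex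
outside `Q`, where `P` is finite and `|P| ≤ |Q|`. Then it appears on an edge joining `Q` to
a vertex outside `P`, since otherwise its edges would match `Q` bijectively with `P` and `p` would
meet two of them. Now take two copies of a `d`-regular bipartite graph with sides of equal size and
replace the two copies of one edge by edges crossing between the copies. With `P` and `Q` the two
sides of one copy, the two crossing edges get the same color in every proper `d`-edge coloring,
while giving them different colors is a proper precoloring.
-/

section EdgeColoring

variable {V W : Type*} {G : SimpleGraph V} {t : ℕ} {f : Sym2 V → ℕ}

namespace IsProperEdgeColoring

theorem eq_of_adj (hf : IsProperEdgeColoring G t f) {u v w : V} (huv : G.Adj u v)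
    (huw : G.Adj u w) (h : f s(u, v) = f s(u, w)) : v = w := by
  by_contra hvw
  exact hf.2 s(u, v) huv s(u, w) huw (mt Sym2.congr_right.1 hvw)
    ⟨u, Sym2.mem_mk_left u v, Sym2.mem_mk_left u w⟩ h

theorem exists_adj_color_eq (hf : IsProperEdgeColoring G t f) {v : V}
    (hv : t ≤ (G.neighborSet v).ncard) {c : ℕ} (hc : c ∈ Set.Icc 1 t) :
    ∃ w, G.Adj v w ∧ f s(v, w) = c := by
  have hcard : (Set.Icc 1 t).ncard ≤ (G.neighborSet v).ncard := by
    simpa [← Set.ncard_coe_finset] using hv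
  obtain ⟨w, hw, hcw⟩ := Set.surj_on_of_inj_on_of_ncard_le (fun w _ ↦ f s(v, w))
    (fun w hw ↦ hf.1 s(v, w) hw) (fun _ _ hw hw' h ↦ hf.eq_of_adj hw hw' h) hcard
    (Set.finite_Icc 1 t) c hc
  exact ⟨w, hw, hcw.symm⟩

theorem exists_adj_notMem_color_eq (hf : IsProperEdgeColoring G t f) {P Q : Set V}
    (hP : P.Finite) (hPQ : P.ncard ≤ Q.ncard) (hQ : ∀ v ∈ Q, t ≤ (G.neighborSet v).ncard)
    {p p' : V} (hp : p ∈ P) (hp' : p' ∉ Q) (hpp' : G.Adj p p') :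
    ∃ q ∈ Q, ∃ q' ∉ P, G.Adj q q' ∧ f s(q, q') = f s(p, p') := by
  by_contra! hcross
  choose! mate hadj hcolor using
    fun q (hq : q ∈ Q) ↦ hf.exists_adj_color_eq (hQ q hq) (hf.1 s(p, p') hpp')
  have hmem : ∀ q ∈ Q, mate q ∈ P := fun q hq ↦ by
    by_contra h
    exact hcross q hq _ h (hadj q hq) (hcolor q hq)
  have hcolor' : ∀ q ∈ Q, f s(mate q, q) = f s(p, p') := fun q hq ↦ by
    rw [Sym2.eq_swap, hcolor q hq]
  have hinj : Set.InjOn mate Q := fun q hq r hr h ↦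
    hf.eq_of_adj (hadj q hq).symm (h ▸ (hadj r hr).symm) <| by
      rw [hcolor' q hq, h, hcolor' r hr]
  obtain ⟨q, hq, rfl⟩ := Set.surj_on_of_inj_on_of_ncard_le (fun q _ ↦ mate q) hmem
    (fun _ _ hq hr h ↦ hinj hq hr h) hPQ hP p hp
  have hqp' : q = p' := hf.eq_of_adj (hadj q hq).symm hpp' (hcolor' q hq)
  exact hp' (hqp' ▸ hq)

theorem comp_map {H : SimpleGraph W} {g : Sym2 W → ℕ} (hg : IsProperEdgeColoring H t g)
    (ι : G →g H) (hι : Function.Injective ι) :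
    IsProperEdgeColoring G t (fun e ↦ g (e.map ι)) := by
  refine ⟨fun e he ↦ hg.1 _ (ι.map_mem_edgeSet he), ?_⟩
  rintro e he e' he' hne ⟨v, hv, hv'⟩
  exact hg.2 _ (ι.map_mem_edgeSet he) _ (ι.map_mem_edgeSet he') ((Sym2.map.injective hι).ne hne)
    ⟨ι v, Sym2.mem_map.2 ⟨v, hv, rfl⟩, Sym2.mem_map.2 ⟨v, hv', rfl⟩⟩

end IsProperEdgeColoring

theorem isProperPrecoloring_pair {e e' : Sym2 V} {S : Set ℕ} (he : e ∈ G.edgeSet)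
    (he' : e' ∈ G.edgeSet) (hS : f e ∈ S) (hS' : f e' ∈ S) (hne : f e ≠ f e') :
    IsProperPrecoloring G {e, e'} f S := by
  refine ⟨Set.pair_subset he he', ?_, ?_⟩
  · rintro _ (rfl | rfl) <;> assumption
  · rintro _ (rfl | rfl) _ (rfl | rfl) h _
    exacts [absurd rfl h, hne, hne.symm, absurd rfl h]

end EdgeColoring

section TwistedDoubleCover

variable {V : Type*}

/-- The double cover of `G` twisted along the set `T` of edges: two copies of `G`, indexed by
`Bool`, in which each pair of parallel copies of an edge in `T` is replaced by the two edges
crossing between the copies. -/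
def twistedDoubleCover (G : SimpleGraph V) (T : Set (Sym2 V)) : SimpleGraph (V × Bool) where
  Adj a b := G.Adj a.1 b.1 ∧ (a.2 = b.2 ↔ s(a.1, b.1) ∉ T)
  symm := ⟨fun a b h ↦ ⟨h.1.symm, by rw [eq_comm, h.2, Sym2.eq_swap]⟩⟩
  loopless := ⟨fun a h ↦ G.loopless.irrefl a.1 h.1⟩

namespace twistedDoubleCover

/-- The covering map from the twisted double cover to its base graph. -/
def projection (G : SimpleGraph V) (T : Set (Sym2 V)) : twistedDoubleCover G T →g G where
  toFun := Prod.fst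
  map_rel' h := h.1

variable {G : SimpleGraph V} {T : Set (Sym2 V)}

theorem projection_bijOn_neighborSet (a : V × Bool) :
    Set.BijOn (projection G T) ((twistedDoubleCover G T).neighborSet a) (G.neighborSet a.1) := by
  refine ⟨fun b hb ↦ hb.1, ?_, ?_⟩
  · rintro ⟨v, i⟩ ⟨-, hi⟩ ⟨w, j⟩ ⟨-, hj⟩ (rfl : v = w)
    have hij : a.2 = i ↔ a.2 = j := hi.trans hj.symm
    obtain rfl : i = j := by cases i <;> cases j <;> cases h : a.2 <;> simp_all
    rfl
  · intro v hv
    by_cases hT : s(a.1, v) ∈ T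
    · exact ⟨(v, !a.2), ⟨hv, by simp [hT]⟩, rfl⟩
    · exact ⟨(v, a.2), ⟨hv, by simp [hT]⟩, rfl⟩

theorem ncard_neighborSet (a : V × Bool) :
    ((twistedDoubleCover G T).neighborSet a).ncard = (G.neighborSet a.1).ncard :=
  (projection_bijOn_neighborSet a).ncard_eq

theorem adj_of_mem {x y : V} (hxy : G.Adj x y) (hT : s(x, y) ∈ T) {i j : Bool} (hij : i ≠ j) :
    (twistedDoubleCover G T).Adj (x, i) (y, j) :=
  ⟨hxy, iff_of_false hij (not_not_intro hT)⟩

theorem color_crossing_eq {t : ℕ} {s s' : Set V} (hG : G.IsBipartiteWith s s') (hs : s.Finite)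
    (hcard : s.ncard ≤ s'.ncard) (hdeg : ∀ v ∈ s', t ≤ (G.neighborSet v).ncard) {x y : V}
    (hx : x ∈ s) (hxy : G.Adj x y) {f : Sym2 (V × Bool) → ℕ}
    (hf : IsProperEdgeColoring (twistedDoubleCover G {s(x, y)}) t f) :
    f s((x, true), (y, false)) = f s((x, false), (y, true)) := by
  obtain ⟨⟨v, i⟩, ⟨hv, rfl : i = false⟩, ⟨w, j⟩, hw, ⟨hvw, hj⟩, hcolor⟩ :=
    hf.exists_adj_notMem_color_eq (P := s ×ˢ {false}) (Q := s' ×ˢ {false})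
      (hs.prod (Set.finite_singleton _)) (by simpa [Set.ncard_prod] using hcard)
      (fun a ha ↦ (hdeg a.1 ha.1).trans_eq (ncard_neighborSet a).symm)
      (p := (x, false)) (p' := (y, true)) ⟨hx, rfl⟩ (fun h ↦ Bool.noConfusion h.2)
      (adj_of_mem hxy rfl Bool.false_ne_true)
  have hws : w ∈ s := hG.symm.mem_of_mem_adj hv hvw
  obtain rfl : j = true := by simpa [hws] using hw
  have hvx : v ≠ x := fun h ↦ Set.disjoint_left.1 hG.disjoint hx (h ▸ hv)
  obtain ⟨rfl, rfl⟩ : v = y ∧ w = x := by simpa [hvx] using hj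
  rwa [Sym2.eq_swap] at hcolor

end twistedDoubleCover

end TwistedDoubleCover

section CompleteBipartiteGraph

theorem completeBipartiteGraph_isBipartiteWith (V W : Type*) :
    (completeBipartiteGraph V W).IsBipartiteWith (Set.range Sum.inl) (Set.range Sum.inr) where
  disjoint := Set.isCompl_range_inl_range_inr.disjoint
  mem_of_adj := by rintro (v | v) (w | w) <;> simp

theorem ncard_neighborSet_completeBipartiteGraph {V : Type*} (a : V ⊕ V) :
    ((completeBipartiteGraph V V).neighborSet a).ncard = Nat.card V := by
  rcases a with v | v
  · have h : (completeBipartiteGraph V V).neighborSet (.inl v) = Set.range Sum.inr := by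
      ext (w | w) <;> simp
    rw [h, Set.ncard_range_of_injective Sum.inr_injective]
  · have h : (completeBipartiteGraph V V).neighborSet (.inr v) = Set.range Sum.inl := by
      ext (w | w) <;> simp
    rw [h, Set.ncard_range_of_injective Sum.inl_injective]

end CompleteBipartiteGraph

/-- For every `d ≥ 2` there are a finite bipartite `d`-regular simple
graph `H` and a proper edge precoloring of `H` with colors from `{1,…,d}` having exactly
two precolored edges which does not extend to a proper `d`-edge coloring of `H`. -/
theorem two_precolored_edges_not_extendable (d : ℕ) (hd : 2 ≤ d) :
    ∃ (n : ℕ) (H : SimpleGraph (Fin n)) (D : Finset (Sym2 (Fin n)))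
      (φ : Sym2 (Fin n) → ℕ),
      H.Colorable 2 ∧
      (∀ v, (H.neighborSet v).ncard = d) ∧
      D.card = 2 ∧
      IsProperPrecoloring H (↑D) φ (Set.Icc 1 d) ∧
      ¬ ∃ f, IsProperEdgeColoring H d f ∧ ∀ e ∈ D, f e = φ e := by
  let x : Fin d ⊕ Fin d := .inl ⟨0, by lia⟩
  let y : Fin d ⊕ Fin d := .inr ⟨0, by lia⟩
  let K := completeBipartiteGraph (Fin d) (Fin d)
  have hK : K.IsBipartiteWith _ _ := completeBipartiteGraph_isBipartiteWith _ _
  have hxy : K.Adj x y := by simp [K, x, y]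
  have hdeg (v) : (K.neighborSet v).ncard = d := by
    rw [ncard_neighborSet_completeBipartiteGraph, Nat.card_fin]
  let G := twistedDoubleCover K {s(x, y)}
  let ι : G ≃g G.overFin rfl := G.overFinIso rfl
  let e := s(ι (x, true), ι (y, false))
  let e' := s(ι (x, false), ι (y, true))
  have hne : e' ≠ e := by simp [e, e', x, y]
  refine ⟨_, G.overFin rfl, {e, e'}, fun a ↦ if a = e then 1 else 2, ?_, fun v ↦ ?_,
    Finset.card_pair hne.symm, ?_, ?_⟩
  · exact hK.isBipartite.of_hom ((twistedDoubleCover.projection K _).comp ι.symm.toHom)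
  · rw [Set.ncard_congr' (ι.symm.mapNeighborSet v), twistedDoubleCover.ncard_neighborSet, hdeg]
  · rw [Finset.coe_pair]
    exact isProperPrecoloring_pair
      (ι.map_adj_iff.2 <| twistedDoubleCover.adj_of_mem hxy rfl Bool.false_ne_true.symm)
      (ι.map_adj_iff.2 <| twistedDoubleCover.adj_of_mem hxy rfl Bool.false_ne_true)
      (by simpa using Nat.one_le_of_lt hd) (by simpa [hne] using hd) (by simp [hne])
  · rintro ⟨f, hf, hext⟩
    have hee' : f e = f e' := twistedDoubleCover.color_crossing_eq hK (Set.finite_range _)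
      (by simp [Set.ncard_range_of_injective, Sum.inl_injective, Sum.inr_injective])
      (fun v _ ↦ (hdeg v).ge) ⟨_, rfl⟩ hxy (hf.comp_map ι.toHom ι.injective)
    simp [hext e (by simp), hext e' (by simp), hne] at hee'
end

section
/- For every integer n ≥ 2 there exist a finite bipartite n-regular simple graph G whose vertex connectivity is at least n−1, and a proper edge precoloring of G with colors from {1,…,n} having exactly two precolored edges, both colored 1, such that the precoloring does not extend to a proper n-edge coloring of G. (Such a graph is obtained from two disjoint copies of the complete bipartite graph K_{n,n−1} by joining each vertex of degree n−1 in the first copy to its counterpart in the second copy by an edge, and precoloring two of these connecting edges with color 1.) -/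
/-! Take two copies of `K_{n,n-1}` and join each vertex of degree `n - 1` to its counterpart in the
other copy by an edge, a rung. In a proper `n`-edge coloring, every vertex on the smaller side of
the first copy has degree `n`, hence is incident with an edge of each color `c`. These `n - 1` edges
form a matching into the `n` endpoints of the rungs, and its ends avoid the rungs colored `c`, so
at most one rung has color `c`: two rungs precolored `1` cannot be extended.

Deleting fewer than `n - 1` vertices spares some rung, and also some index of the smaller side in
both copies. The surviving rung together with the two spared vertices links up everything left. -/

variable {V W ι κ : Type*}

section EdgeColoring

variable {G : SimpleGraph V} {H : SimpleGraph W} {t : ℕ}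

theorem IsProperPrecoloring.map {D : Set (Sym2 V)} {φ : Sym2 W → ℕ} {S : Set ℕ} {e : G →g H}
    (he : Function.Injective e) (hφ : IsProperPrecoloring G D (φ ∘ Sym2.map e) S) :
    IsProperPrecoloring H (Sym2.map e '' D) φ S := by
  obtain ⟨hD, hS, hproper⟩ := hφ
  refine ⟨?_, Set.forall_mem_image.2 hS, Set.forall_mem_image.2 fun x hx ↦
    Set.forall_mem_image.2 fun y hy hxy ↦ ?_⟩
  · rintro _ ⟨x, hx, rfl⟩
    exact e.map_mem_edgeSet (hD hx)
  · rintro ⟨w, hwx, hwy⟩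
    obtain ⟨v, hv, rfl⟩ := Sym2.mem_map.1 hwx
    obtain ⟨v', hv', hvv'⟩ := Sym2.mem_map.1 hwy
    obtain rfl := he hvv'
    exact hproper x hx y hy (ne_of_apply_ne _ hxy) ⟨_, hv, hv'⟩

theorem IsProperEdgeColoring.comp_map_s19 {f : Sym2 W → ℕ} (hf : IsProperEdgeColoring H t f)
    {e : G →g H} (he : Function.Injective e) : IsProperEdgeColoring G t (f ∘ Sym2.map e) := by
  refine ⟨fun x hx ↦ hf.1 _ (e.map_mem_edgeSet hx), ?_⟩
  rintro x hx y hy hxy ⟨v, hvx, hvy⟩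
  exact hf.2 _ (e.map_mem_edgeSet hx) _ (e.map_mem_edgeSet hy)
    ((Sym2.map.injective he).ne hxy)
    ⟨e v, Sym2.mem_map.2 ⟨v, hvx, rfl⟩, Sym2.mem_map.2 ⟨v, hvy, rfl⟩⟩

theorem IsProperEdgeColoring.injOn_neighborSet {f : Sym2 V → ℕ}
    (hf : IsProperEdgeColoring G t f) (v : V) :
    Set.InjOn (fun w ↦ f s(v, w)) (G.neighborSet v) := by
  intro w hw w' hw' hww'
  by_contra hne
  exact hf.2 s(v, w) hw s(v, w') hw' (mt Sym2.congr_right.1 hne)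
    ⟨v, Sym2.mem_mk_left v w, Sym2.mem_mk_left v w'⟩ hww'

theorem IsProperEdgeColoring.exists_adj_color_eq_s19 {f : Sym2 V → ℕ} {c : ℕ} {v : V}
    (hf : IsProperEdgeColoring G t f) (hv : t ≤ (G.neighborSet v).ncard) (hc : c ∈ Set.Icc 1 t) :
    ∃ w, G.Adj v w ∧ f s(v, w) = c := by
  have himage : (fun w ↦ f s(v, w)) '' G.neighborSet v = Set.Icc 1 t := by
    refine Set.eq_of_subset_of_ncard_le (Set.image_subset_iff.2 fun w hw ↦ hf.1 _ hw) ?_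
    rw [(hf.injOn_neighborSet v).ncard_image]
    simpa [Set.ncard_eq_toFinset_card'] using hv
  simpa [← himage] using hc

end EdgeColoring

section VertexConnectivity

/-- `G` has vertex connectivity at least `k`: it has more than `k` vertices and stays connected
after deleting any set of fewer than `k` of them. Cardinalities are taken in `ℕ∞`, so that the
notion is meaningful for infinite graphs as well. -/
def IsVertexConnected (G : SimpleGraph V) (k : ℕ) : Prop :=
  k < ENat.card V ∧ ∀ s : Set V, s.encard < k → (G.induce sᶜ).Connected

theorem IsVertexConnected.of_iso {G : SimpleGraph V} {H : SimpleGraph W} {k : ℕ}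
    (hG : IsVertexConnected G k) (e : G ≃g H) : IsVertexConnected H k := by
  refine ⟨ENat.card_congr e.toEquiv ▸ hG.1, fun s hs ↦ ?_⟩
  have hs' : (e ⁻¹' s).encard < k := by
    rwa [Set.encard_preimage_of_bijective e.bijective]
  exact (e.induce (e.bijective.bijOn_preimage.compl e.bijective)).connected_iff.1 (hG.2 _ hs')

theorem exists_forall_notMem_of_encard_lt {s : Set (V × W)} {g : ι → W}
    (hg : Function.Injective g) (hs : s.encard < ENat.card ι) : ∃ i, ∀ v, (v, g i) ∉ s := by
  by_contra! h
  choose v hv using h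
  have hinj : Function.Injective fun i ↦ (⟨(v i, g i), hv i⟩ : s) := fun i j hij ↦
    hg (Prod.ext_iff.1 (Subtype.ext_iff.1 hij)).2
  exact hs.not_ge (ENat.card_le_card_of_injective hinj)

end VertexConnectivity

/-- Two disjoint copies of the complete bipartite graph with sides `ι` and `κ`, indexed by `Bool`,
in which every vertex of the side `ι` is joined to its counterpart in the other copy. -/
def doubledBiclique (ι κ : Type*) : SimpleGraph (Bool × (ι ⊕ κ)) where
  Adj u v := u.1 = v.1 ∧ (completeBipartiteGraph ι κ).Adj u.2 v.2 ∨
    u.1 ≠ v.1 ∧ u.2 = v.2 ∧ u.2.isLeft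
  symm := ⟨fun u v ↦ by grind [SimpleGraph.adj_comm]⟩
  loopless := ⟨by simp⟩

namespace doubledBiclique

@[simp]
theorem adj_inl_inl {b b' : Bool} {i i' : ι} :
    (doubledBiclique ι κ).Adj (b, .inl i) (b', .inl i') ↔ b' = !b ∧ i' = i := by
  cases b <;> cases b' <;> simp [doubledBiclique, eq_comm (a := i)]

@[simp]
theorem adj_inl_inr {b b' : Bool} {i : ι} {j : κ} :
    (doubledBiclique ι κ).Adj (b, .inl i) (b', .inr j) ↔ b' = b := by
  simp [doubledBiclique, eq_comm (a := b)]

@[simp]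
theorem adj_inr_inl {b b' : Bool} {i : ι} {j : κ} :
    (doubledBiclique ι κ).Adj (b, .inr j) (b', .inl i) ↔ b' = b := by
  simp [doubledBiclique, eq_comm (a := b)]

@[simp]
theorem not_adj_inr_inr {b b' : Bool} {j j' : κ} :
    ¬ (doubledBiclique ι κ).Adj (b, .inr j) (b', .inr j') := by
  simp [doubledBiclique]

theorem colorable_two : (doubledBiclique ι κ).Colorable 2 := by
  let color : (doubledBiclique ι κ).Coloring Bool := .mk (fun v ↦ v.1 ^^ v.2.isLeft) <| by
    rintro ⟨b, i | j⟩ ⟨b', i' | j'⟩ <;> simp +contextual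
  exact color.colorable

theorem ncard_neighborSet_inl [Finite κ] (b : Bool) (i : ι) :
    ((doubledBiclique ι κ).neighborSet (b, .inl i)).ncard = Nat.card κ + 1 := by
  have hneighbors : (doubledBiclique ι κ).neighborSet (b, .inl i) =
      insert (!b, .inl i) (Set.range fun j ↦ (b, .inr j)) := by
    ext ⟨b', i' | j'⟩ <;> simp [eq_comm]
  rw [hneighbors, Set.ncard_insert_of_notMem (by simp),
    Set.ncard_range_of_injective fun j j' h ↦ by simpa using h]

theorem ncard_neighborSet_inr (b : Bool) (j : κ) :
    ((doubledBiclique ι κ).neighborSet (b, .inr j)).ncard = Nat.card ι := by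
  have hneighbors : (doubledBiclique ι κ).neighborSet (b, .inr j) =
      Set.range fun i ↦ (b, .inl i) := by
    ext ⟨b', i' | j'⟩ <;> simp [eq_comm]
  rw [hneighbors, Set.ncard_range_of_injective fun i i' h ↦ by simpa using h]

theorem ncard_neighborSet [Finite κ] (h : Nat.card ι = Nat.card κ + 1) (v : Bool × (ι ⊕ κ)) :
    ((doubledBiclique ι κ).neighborSet v).ncard = Nat.card ι := by
  obtain ⟨b, i | j⟩ := v
  · exact (ncard_neighborSet_inl b i).trans h.symm
  · exact ncard_neighborSet_inr b j

theorem connected_induce_compl {s : Set (Bool × (ι ⊕ κ))} (hι : s.encard < ENat.card ι)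
    (hκ : s.encard < ENat.card κ) : ((doubledBiclique ι κ).induce sᶜ).Connected := by
  obtain ⟨i, hi⟩ := exists_forall_notMem_of_encard_lt Sum.inl_injective hι
  obtain ⟨j, hj⟩ := exists_forall_notMem_of_encard_lt Sum.inr_injective hκ
  have reachable_of_adj {u v} (hu : u ∈ sᶜ) (hv : v ∈ sᶜ) (h : (doubledBiclique ι κ).Adj u v) :
      ((doubledBiclique ι κ).induce sᶜ).Reachable ⟨u, hu⟩ ⟨v, hv⟩ :=
    SimpleGraph.Adj.reachable h
  have reachable_inl (b) : ((doubledBiclique ι κ).induce sᶜ).Reachable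
      ⟨(false, .inl i), hi false⟩ ⟨(b, .inl i), hi b⟩ := by
    cases b
    · rfl
    · exact reachable_of_adj _ _ (by simp)
  refine (SimpleGraph.connected_iff_exists_forall_reachable _).2
    ⟨⟨(false, .inl i), hi false⟩, ?_⟩
  rintro ⟨⟨b, i' | j'⟩, hv⟩
  · exact (reachable_inl b).trans <| (reachable_of_adj (hi b) (hj b) (by simp)).trans <|
      reachable_of_adj _ hv (by simp)
  · exact (reachable_inl b).trans <| reachable_of_adj _ hv (by simp)

theorem isVertexConnected [Nonempty ι] {k : ℕ} (hι : k ≤ ENat.card ι) (hκ : k ≤ ENat.card κ) :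
    IsVertexConnected (doubledBiclique ι κ) k := by
  refine ⟨?_, fun s hs ↦ connected_induce_compl (hs.trans_le hι) (hs.trans_le hκ)⟩
  calc (k : ℕ∞) < 1 + k := by exact_mod_cast Nat.lt_add_of_pos_left one_pos
    _ ≤ ENat.card ι + ENat.card κ :=
      add_le_add ((ENat.one_le_card_iff_nonempty ι).2 ‹_›) hκ
    _ = ENat.card (ι ⊕ κ) := (ENat.card_sum ι κ).symm
    _ ≤ ENat.card (Bool × (ι ⊕ κ)) :=
      ENat.card_le_card_of_injective (Prod.mk_right_injective false)

/-- The edge joining the two copies of the vertex `i`; two of these edges get precolored. -/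
def rung (i : ι) : Sym2 (Bool × (ι ⊕ κ)) := s((false, .inl i), (true, .inl i))

@[simp]
theorem mem_rung {v : Bool × (ι ⊕ κ)} {i : ι} : v ∈ rung i ↔ v.2 = .inl i := by
  obtain ⟨_ | _, _⟩ := v <;> simp [rung]

theorem rung_injective : Function.Injective (rung : ι → Sym2 (Bool × (ι ⊕ κ))) := by
  intro i i' h
  have hmem : (false, Sum.inl i) ∈ rung (κ := κ) i' := h ▸ mem_rung.2 rfl
  simpa using hmem

theorem rung_mem_edgeSet (i : ι) : rung i ∈ (doubledBiclique ι κ).edgeSet :=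
  adj_inl_inl.2 ⟨rfl, rfl⟩

theorem isProperPrecoloring_image_rung (I : Set ι) {c : ℕ} {S : Set ℕ} (hc : c ∈ S) :
    IsProperPrecoloring (doubledBiclique ι κ) (rung '' I) (fun _ ↦ c) S := by
  refine ⟨Set.image_subset_iff.2 fun i _ ↦ rung_mem_edgeSet i, fun _ _ ↦ hc, ?_⟩
  rintro _ ⟨i, _, rfl⟩ _ ⟨i', _, rfl⟩ hne ⟨v, hv, hv'⟩
  rw [mem_rung] at hv hv'
  exact absurd (congrArg rung (Sum.inl_injective (hv.symm.trans hv'))) hne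

section Coloring

variable {f : Sym2 (Bool × (ι ⊕ κ)) → ℕ} {t c : ℕ}

theorem card_add_ncard_rung_eq_le (ht : t ≤ Nat.card ι)
    (hf : IsProperEdgeColoring (doubledBiclique ι κ) t f) (hc : c ∈ Set.Icc 1 t) :
    Nat.card κ + {i | f (rung i) = c}.ncard ≤ Nat.card ι := by
  have : Finite ι := Nat.finite_of_card_ne_zero
    (Nat.one_le_iff_ne_zero.1 (hc.1.trans (hc.2.trans ht)))
  have hpartner (j : κ) : ∃ i : ι, f s((false, .inl i), (false, .inr j)) = c := by
    obtain ⟨⟨b, i | j'⟩, hadj, hcolor⟩ :=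
      hf.exists_adj_color_eq_s19 (ht.trans (ncard_neighborSet_inr false j).ge) hc
    · obtain rfl := adj_inr_inl.1 hadj
      exact ⟨i, Sym2.eq_swap ▸ hcolor⟩
    · exact absurd hadj not_adj_inr_inr
  choose partner hpartner using hpartner
  have hinj : Function.Injective partner := fun j j' h ↦ by
    simpa using hf.injOn_neighborSet (false, .inl (partner j)) (x₁ := (false, .inr j))
      (x₂ := (false, .inr j')) (by simp) (by simp) ((hpartner j).trans (h ▸ (hpartner j').symm))
  have havoid : {i | f (rung i) = c} ⊆ (Set.range partner)ᶜ := by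
    rintro _ hi ⟨j, rfl⟩
    simpa using hf.injOn_neighborSet (false, .inl (partner j)) (x₁ := (false, .inr j))
      (x₂ := (true, .inl (partner j))) (by simp) (by simp) ((hpartner j).trans hi.symm)
  calc Nat.card κ + {i | f (rung i) = c}.ncard
      ≤ (Set.range partner).ncard + (Set.range partner)ᶜ.ncard := by
        rw [Set.ncard_range_of_injective hinj]
        gcongr
        exact Set.toFinite _
    _ = Nat.card ι := Set.ncard_add_ncard_compl _

theorem color_rung_injective (hκ : Nat.card ι ≤ Nat.card κ + 1)
    (ht : t ≤ Nat.card ι) (hf : IsProperEdgeColoring (doubledBiclique ι κ) t f) :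
    Function.Injective fun i ↦ f (rung i) := by
  intro i i' h
  have hc := hf.1 _ (rung_mem_edgeSet i)
  have : Finite ι := Nat.finite_of_card_ne_zero
    (Nat.one_le_iff_ne_zero.1 (hc.1.trans (hc.2.trans ht)))
  have hle_one : {x | f (rung x) = f (rung i)}.ncard ≤ 1 := by
    have := card_add_ncard_rung_eq_le ht hf hc
    omega
  exact (Set.ncard_le_one_iff (Set.toFinite _)).1 hle_one rfl h.symm

end Coloring

end doubledBiclique

/-- For every `n ≥ 2` there are a finite bipartite `n`-regular simple
graph `G` with vertex connectivity at least `n - 1` (it has more than `n - 1` vertices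
and stays connected after deleting any set of fewer than `n - 1` vertices) and a proper
edge precoloring of `G` with colors from `{1,…,n}` having exactly two precolored edges,
both colored `1`, which does not extend to a proper `n`-edge coloring of `G`. -/
theorem highly_connected_not_extendable (n : ℕ) (hn : 2 ≤ n) :
    ∃ (m : ℕ) (G : SimpleGraph (Fin m)) (D : Finset (Sym2 (Fin m)))
      (φ : Sym2 (Fin m) → ℕ),
      G.Colorable 2 ∧
      (∀ v, (G.neighborSet v).ncard = n) ∧
      n - 1 < m ∧
      (∀ s : Set (Fin m), s.ncard < n - 1 → (G.induce sᶜ).Connected) ∧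
      D.card = 2 ∧
      (∀ e ∈ D, φ e = 1) ∧
      IsProperPrecoloring G (↑D) φ (Set.Icc 1 n) ∧
      ¬ ∃ f, IsProperEdgeColoring G n f ∧ ∀ e ∈ D, f e = φ e := by
  obtain ⟨k, rfl⟩ := Nat.exists_eq_add_of_le' hn
  let G := doubledBiclique (Fin (k + 2)) (Fin (k + 1))
  let e := G.overFinIso rfl
  have hdegree (v) : (G.neighborSet v).ncard = k + 2 := by
    simpa using doubledBiclique.ncard_neighborSet (by simp) v
  have hconnected : IsVertexConnected (G.overFin rfl) (k + 1) :=
    (doubledBiclique.isVertexConnected (by simp) (by simp)).of_iso e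
  let rung : Fin (k + 2) ↪ _ :=
    ⟨Sym2.map e ∘ doubledBiclique.rung, (Sym2.map.injective e.injective).comp
      doubledBiclique.rung_injective⟩
  refine ⟨_, G.overFin rfl, ({0, 1} : Finset _).map rung, fun _ ↦ 1,
    doubledBiclique.colorable_two.of_hom e.symm.toHom, fun v ↦ ?_, ?_, fun s hs ↦ ?_, by simp,
    fun _ _ ↦ rfl, ?_, ?_⟩
  · exact (Nat.card_congr (e.symm.mapNeighborSet v)).trans (hdegree _)
  · simpa only [ENat.card_eq_coe_fintype_card, Fintype.card_fin, Nat.cast_lt] using! hconnected.1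
  · exact hconnected.2 s (by rw [← s.toFinite.cast_ncard_eq]; exact_mod_cast hs)
  · rw [Finset.coe_map, Function.Embedding.coeFn_mk, Set.image_comp]
    exact (doubledBiclique.isProperPrecoloring_image_rung _ (by simp)).map
      (e := e.toHom) e.injective
  · rintro ⟨f, hf, hext⟩
    have hinj := doubledBiclique.color_rung_injective (by simp) (by simp)
      (hf.comp_map_s19 (e := e.toHom) e.injective)
    exact zero_ne_one (hinj ((hext (rung 0) (by simp)).trans (hext (rung 1) (by simp)).symm))
end
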